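/- arXiv:2408.13125 — 2 statements merged into one kernel-verified Lean document; each statement's English description precedes it below -/
import Mathlib

section
/- Let d, a, b, c be real numbers, not all zero, let n = d² + a² + b² + c², let Q be the matrix quaternion and Q* the anti-quaternion associated with (d,a,b,c), and set R = (1/n)·Q*·Q. Then R is a rotation of E⁴: R·Rᵀ = I₄ and det R = 1; moreover R fixes the axis vector (0, a, b, c), i.e. R·(0,a,b,c)ᵀ = (0,a,b,c)ᵀ. -/
/-- De Casteljau's matrix quaternion associated with `(d,a,b,c) ∈ ℝ⁴`. -/
def matQ (d a b c : ℝ) : Matrix (Fin 4) (Fin 4) ℝ :=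
  !![d, -a, -b, -c;
     a,  d, -c,  b;
     b,  c,  d, -a;
     c, -b,  a,  d]

/-- De Casteljau's anti-quaternion associated with `(d,a,b,c) ∈ ℝ⁴`. -/
def antiQ (d a b c : ℝ) : Matrix (Fin 4) (Fin 4) ℝ :=
  !![ d,  a,  b,  c;
     -a,  d, -c,  b;
     -b,  c,  d, -a;
     -c, -b,  a,  d]

/-!
For `q = d + ai + bj + ck`, the matrix `Q` represents `x ↦ q * x` and `Q*` represents
`x ↦ x * star q`, so `R` represents the conjugation `x ↦ q * x * q⁻¹`, which fixes `q.im` because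
`q.im` commutes with `q`. Conjugating by `star` and transposing are both ways to pass from `q` to
`star q`: the first turns left into right multiplications, and the second turns `q * star q = n`
into `Q * Qᵀ = n • 1` and hence `Q* * Q*ᵀ = n • 1`. Both also preserve determinants, so
`det (Q* * Q) = det (Q * Qᵀ) = n ^ 4`.
-/

open Matrix Quaternion

section CommRing

variable {S : Type*} [CommRing S]

/-- The basis `1, i, j, k` of the quaternions `ℍ[S]`, in which all matrices below are taken. -/
noncomputable def quaternionBasis : Module.Basis (Fin 4) S ℍ[S] :=
  QuaternionAlgebra.basisOneIJK (-1) 0 (-1)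

theorem quaternionBasis_repr (q : ℍ[S]) :
    ⇑(quaternionBasis.repr q) = ![q.re, q.imI, q.imJ, q.imK] :=
  rfl

theorem quaternionBasis_coords (i : Fin 4) :
    ![(quaternionBasis i : ℍ[S]).re, (quaternionBasis i).imI, (quaternionBasis i).imJ,
      (quaternionBasis i).imK] = Pi.single i 1 := by
  rw [← quaternionBasis_repr, quaternionBasis.repr_self, Finsupp.single_eq_pi_single]

@[simp]
theorem re_quaternionBasis (i : Fin 4) :
    (quaternionBasis i : ℍ[S]).re = (Pi.single i 1 : Fin 4 → S) 0 :=
  congrFun (quaternionBasis_coords i) 0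

@[simp]
theorem imI_quaternionBasis (i : Fin 4) :
    (quaternionBasis i : ℍ[S]).imI = (Pi.single i 1 : Fin 4 → S) 1 :=
  congrFun (quaternionBasis_coords i) 1

@[simp]
theorem imJ_quaternionBasis (i : Fin 4) :
    (quaternionBasis i : ℍ[S]).imJ = (Pi.single i 1 : Fin 4 → S) 2 :=
  congrFun (quaternionBasis_coords i) 2

@[simp]
theorem imK_quaternionBasis (i : Fin 4) :
    (quaternionBasis i : ℍ[S]).imK = (Pi.single i 1 : Fin 4 → S) 3 :=
  congrFun (quaternionBasis_coords i) 3

/-- The matrix of left multiplication `x ↦ q * x`. -/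
noncomputable def leftMatrix (q : ℍ[S]) : Matrix (Fin 4) (Fin 4) S :=
  Algebra.leftMulMatrix quaternionBasis q

/-- The matrix of right multiplication `x ↦ x * q`. -/
noncomputable def rightMatrix (q : ℍ[S]) : Matrix (Fin 4) (Fin 4) S :=
  LinearMap.toMatrix quaternionBasis quaternionBasis (LinearMap.mulRight S q)

/-- The matrix of `x ↦ q * x * star q`, which is `normSq q` times conjugation by `q`. -/
noncomputable def sandwichMatrix (q : ℍ[S]) : Matrix (Fin 4) (Fin 4) S :=
  LinearMap.toMatrix quaternionBasis quaternionBasis (LinearMap.mulLeftRight S (q, star q))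

/-- The matrix of quaternion conjugation `x ↦ star x`. -/
def starMatrix : Matrix (Fin 4) (Fin 4) S :=
  diagonal ![1, -1, -1, -1]

theorem leftMatrix_eq (q : ℍ[S]) :
    leftMatrix q =
      !![q.re, -q.imI, -q.imJ, -q.imK;
         q.imI, q.re, -q.imK, q.imJ;
         q.imJ, q.imK, q.re, -q.imI;
         q.imK, -q.imJ, q.imI, q.re] := by
  ext i j
  rw [leftMatrix, Algebra.leftMulMatrix_eq_repr_mul, quaternionBasis_repr]
  fin_cases i <;> fin_cases j <;> simp

theorem rightMatrix_eq (q : ℍ[S]) :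
    rightMatrix q =
      !![q.re, -q.imI, -q.imJ, -q.imK;
         q.imI, q.re, q.imK, -q.imJ;
         q.imJ, -q.imK, q.re, q.imI;
         q.imK, q.imJ, -q.imI, q.re] := by
  ext i j
  rw [rightMatrix, LinearMap.toMatrix_apply, LinearMap.mulRight_apply, quaternionBasis_repr]
  fin_cases i <;> fin_cases j <;> simp

theorem leftMatrix_star (q : ℍ[S]) : leftMatrix (star q) = (leftMatrix q)ᵀ := by
  ext i j
  rw [leftMatrix_eq, leftMatrix_eq]
  fin_cases i <;> fin_cases j <;> simp

theorem leftMatrix_mul_transpose (q : ℍ[S]) :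
    leftMatrix q * (leftMatrix q)ᵀ = normSq q • 1 := by
  rw [← leftMatrix_star, leftMatrix, leftMatrix, ← map_mul, self_mul_star,
    ← algebraMap_def, AlgHom.commutes, Algebra.algebraMap_eq_smul_one]

theorem starMatrix_transpose : (starMatrix : Matrix (Fin 4) (Fin 4) S)ᵀ = starMatrix :=
  diagonal_transpose _

theorem starMatrix_mul_self : (starMatrix : Matrix (Fin 4) (Fin 4) S) * starMatrix = 1 := by
  rw [starMatrix, diagonal_mul_diagonal, ← diagonal_one]
  congr 1
  ext i
  fin_cases i <;> simp

-- Conjugation reverses products: `x * q = star (star q * star x)`.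
theorem rightMatrix_eq_starMatrix_conj (q : ℍ[S]) :
    rightMatrix q = starMatrix * leftMatrix (star q) * starMatrix := by
  ext i j
  rw [starMatrix, mul_diagonal, diagonal_mul, leftMatrix_eq, rightMatrix_eq]
  fin_cases i <;> fin_cases j <;> simp

theorem rightMatrix_mul_transpose (q : ℍ[S]) :
    rightMatrix q * (rightMatrix q)ᵀ = normSq q • 1 := by
  calc rightMatrix q * (rightMatrix q)ᵀ
      = starMatrix * leftMatrix (star q) * (starMatrix * starMatrix) * (leftMatrix (star q))ᵀ
          * starMatrix := by
        simp only [rightMatrix_eq_starMatrix_conj, transpose_mul,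
          starMatrix_transpose, Matrix.mul_assoc]
    _ = starMatrix * (leftMatrix (star q) * (leftMatrix (star q))ᵀ) * starMatrix := by
        simp only [starMatrix_mul_self, Matrix.mul_one, Matrix.mul_assoc]
    _ = normSq q • 1 := by
        rw [leftMatrix_mul_transpose, normSq_star, Matrix.mul_smul, Matrix.mul_one,
          Matrix.smul_mul, starMatrix_mul_self]

theorem det_rightMatrix (q : ℍ[S]) : (rightMatrix q).det = (leftMatrix q).det := by
  rw [rightMatrix_eq_starMatrix_conj, det_mul_right_comm, starMatrix_mul_self,
    Matrix.one_mul, leftMatrix_star, det_transpose]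

theorem sandwichMatrix_eq (q : ℍ[S]) :
    sandwichMatrix q = rightMatrix (star q) * leftMatrix q :=
  LinearMap.toMatrix_comp quaternionBasis quaternionBasis quaternionBasis
    (LinearMap.mulRight S (star q)) (LinearMap.mulLeft S q)

theorem sandwichMatrix_mul_transpose (q : ℍ[S]) :
    sandwichMatrix q * (sandwichMatrix q)ᵀ = normSq q ^ 2 • 1 := by
  calc sandwichMatrix q * (sandwichMatrix q)ᵀ
      = rightMatrix (star q) * (leftMatrix q * (leftMatrix q)ᵀ) * (rightMatrix (star q))ᵀ := by
        simp only [sandwichMatrix_eq, transpose_mul, Matrix.mul_assoc]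
    _ = normSq q • (rightMatrix (star q) * (rightMatrix (star q))ᵀ) := by
        rw [leftMatrix_mul_transpose, Matrix.mul_smul, Matrix.mul_one, Matrix.smul_mul]
    _ = normSq q ^ 2 • 1 := by
        rw [rightMatrix_mul_transpose, normSq_star, smul_smul, ← sq]

theorem det_sandwichMatrix (q : ℍ[S]) : (sandwichMatrix q).det = normSq q ^ 4 := by
  calc (sandwichMatrix q).det
      = (leftMatrix q * (leftMatrix q)ᵀ).det := by
        rw [sandwichMatrix_eq, det_mul, det_rightMatrix, leftMatrix_star, mul_comm, ← det_mul]
    _ = normSq q ^ 4 := by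
        rw [leftMatrix_mul_transpose, det_smul, det_one, mul_one, Fintype.card_fin]

theorem commute_im (q : ℍ[S]) : Commute q q.im := by
  simpa only [re_add_im] using (coe_commute q.re q.im).add_left (Commute.refl q.im)

theorem mul_im_mul_star (q : ℍ[S]) : q * q.im * star q = normSq q • q.im := by
  rw [(commute_im q).eq, mul_assoc, self_mul_star, mul_coe_eq_smul]

theorem sandwichMatrix_mulVec_im (q : ℍ[S]) :
    sandwichMatrix q *ᵥ ![0, q.imI, q.imJ, q.imK] = normSq q • ![0, q.imI, q.imJ, q.imK] := by
  have repr_im : ⇑(quaternionBasis.repr q.im) = ![0, q.imI, q.imJ, q.imK] := quaternionBasis_repr _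
  rw [← repr_im, sandwichMatrix, LinearMap.toMatrix_mulVec_repr, LinearMap.mulLeftRight_apply,
    mul_im_mul_star, map_smul, Finsupp.coe_smul]

theorem quaternion_rotation_general (q : ℍ[S]) {s : S} (hs : s * normSq q = 1) :
    (s • sandwichMatrix q) * (s • sandwichMatrix q)ᵀ = 1 ∧
    (s • sandwichMatrix q).det = 1 ∧
    (s • sandwichMatrix q) *ᵥ ![0, q.imI, q.imJ, q.imK] = ![0, q.imI, q.imJ, q.imK] := by
  refine ⟨?orthogonal, ?det, ?axis⟩
  case orthogonal =>
    rw [transpose_smul, smul_mul_smul_comm, sandwichMatrix_mul_transpose, smul_smul, ← sq,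
      ← mul_pow, hs, one_pow, one_smul]
  case det =>
    rw [det_smul, det_sandwichMatrix, Fintype.card_fin, ← mul_pow, hs, one_pow]
  case axis =>
    rw [smul_mulVec, sandwichMatrix_mulVec_im, smul_smul, hs, one_smul]

end CommRing

theorem matQ_eq_leftMatrix (q : ℍ[ℝ]) : matQ q.re q.imI q.imJ q.imK = leftMatrix q :=
  (leftMatrix_eq q).symm

theorem antiQ_eq_rightMatrix_star (q : ℍ[ℝ]) :
    antiQ q.re q.imI q.imJ q.imK = rightMatrix (star q) := by
  simp [antiQ, rightMatrix_eq]

theorem antiQ_mul_matQ (q : ℍ[ℝ]) :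
    antiQ q.re q.imI q.imJ q.imK * matQ q.re q.imI q.imJ q.imK = sandwichMatrix q := by
  rw [antiQ_eq_rightMatrix_star, matQ_eq_leftMatrix, sandwichMatrix_eq]

/-- De Casteljau's rotation theorem: the normalised product `R = (1/n)·Q*·Q` of a
matrix quaternion with its own anti-quaternion is a rotation of `E⁴`
(`R·Rᵀ = I₄`, `det R = 1`) fixing the axis vector `(0, a, b, c)`. -/
theorem quaternion_rotation (d a b c : ℝ)
    (hne : ¬(d = 0 ∧ a = 0 ∧ b = 0 ∧ c = 0))
    (n : ℝ) (hn : n = d ^ 2 + a ^ 2 + b ^ 2 + c ^ 2)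
    (R : Matrix (Fin 4) (Fin 4) ℝ) (hR : R = (1 / n) • (antiQ d a b c * matQ d a b c)) :
    R * R.transpose = (1 : Matrix (Fin 4) (Fin 4) ℝ) ∧
    R.det = 1 ∧
    R.mulVec ![0, a, b, c] = ![0, a, b, c] := by
  obtain ⟨q, rfl, rfl, rfl, rfl⟩ :
      ∃ q : ℍ[ℝ], q.re = d ∧ q.imI = a ∧ q.imJ = b ∧ q.imK = c :=
    ⟨⟨d, a, b, c⟩, rfl, rfl, rfl, rfl⟩
  have normSq_q : normSq q ≠ 0 := normSq_ne_zero.mpr fun h => hne (by simp [h])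
  rw [hR, hn, ← normSq_def', antiQ_mul_matQ]
  exact quaternion_rotation_general q (one_div_mul_cancel normSq_q)
end

section
/- Let d, a, b, c be real numbers with a² + b² + c² = 1, let n = d² + 1, and let R = (1/n)·Q*·Q where Q, Q* are the matrix quaternion and anti-quaternion associated with (d,a,b,c). Let (α, β, γ) be a unit vector orthogonal to (a,b,c), i.e. α² + β² + γ² = 1 and aα + bβ + cγ = 0. Then R·(0,α,β,γ)ᵀ = cos φ · (0,α,β,γ)ᵀ + sin φ · (0, bγ−cβ, cα−aγ, aβ−bα)ᵀ, where cos φ = (d² − 1)/(d² + 1) and sin φ = 2d/(d² + 1); that is, R rotates the plane orthogonal to the axis (a,b,c) by the angle φ. -/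
/-!
Identify `(t, v) ∈ ℝ × ℝ³` with the quaternion `t + v` and put `q = d + u`. Then `Q` is left
multiplication by `q` and `Q*` is right multiplication by its conjugate `d - u`, so that `Q* Q` is
the sandwich `x ↦ q x (d - u)`. On a purely imaginary `x = v` the two multiplications produce the
double cross product `u × (u × v) = (u ⬝ v) u - (u ⬝ u) v`, and what remains is Rodrigues' formula.
-/

section

open Matrix

variable (d : ℝ) (u v : Fin 3 → ℝ)

theorem matQ_mulVec_vecCons (t : ℝ) :
    matQ d (u 0) (u 1) (u 2) *ᵥ vecCons t v =
      vecCons (d * t - u ⬝ᵥ v) (d • v + t • u + u ⨯₃ v) := by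
  ext i
  fin_cases i <;>
    simp only [matQ, mulVec, dotProduct, cross_apply, Fin.sum_univ_three, Fin.sum_univ_four,
      of_apply, cons_val, Fin.zero_eta, Fin.mk_one, Fin.reduceFinMk, Pi.add_apply,
      Pi.smul_apply, smul_eq_mul] <;>
    ring

theorem antiQ_mulVec_vecCons (t : ℝ) :
    antiQ d (u 0) (u 1) (u 2) *ᵥ vecCons t v =
      vecCons (d * t + u ⬝ᵥ v) (d • v - t • u + u ⨯₃ v) := by
  ext i
  fin_cases i <;>
    simp only [antiQ, mulVec, dotProduct, cross_apply, Fin.sum_univ_three, Fin.sum_univ_four,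
      of_apply, cons_val, Fin.zero_eta, Fin.mk_one, Fin.reduceFinMk, Pi.add_apply, Pi.sub_apply,
      Pi.smul_apply, smul_eq_mul] <;>
    ring

theorem antiQ_mul_matQ_mulVec_vecCons_zero :
    (antiQ d (u 0) (u 1) (u 2) * matQ d (u 0) (u 1) (u 2)) *ᵥ vecCons 0 v =
      vecCons 0 ((d ^ 2 - u ⬝ᵥ u) • v + (2 * d) • (u ⨯₃ v) + (2 * (u ⬝ᵥ v)) • u) := by
  rw [← mulVec_mulVec, matQ_mulVec_vecCons, antiQ_mulVec_vecCons]
  congr 1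
  · simp only [dotProduct_add, dotProduct_smul, dot_self_cross, smul_eq_mul]
    ring
  · simp only [map_add, map_smul, cross_self, cross_cross_eq_smul_sub_smul']
    module

theorem quaternion_rotation_angle_general (hu : u ⬝ᵥ u = 1) :
    ((1 / (d ^ 2 + 1)) • (antiQ d (u 0) (u 1) (u 2) * matQ d (u 0) (u 1) (u 2))) *ᵥ vecCons 0 v =
      vecCons 0 (((d ^ 2 - 1) / (d ^ 2 + 1)) • v + (2 * d / (d ^ 2 + 1)) • (u ⨯₃ v) +
        ((1 - (d ^ 2 - 1) / (d ^ 2 + 1)) * (u ⬝ᵥ v)) • u) := by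
  have one_sub_cos : 1 - (d ^ 2 - 1) / (d ^ 2 + 1) = 2 / (d ^ 2 + 1) := by
    field_simp
    ring
  rw [smul_mulVec, antiQ_mul_matQ_mulVec_vecCons_zero, hu, one_sub_cos, smul_cons, smul_zero]
  congr 1
  module

end

/-- The rotation angle of de Casteljau's quaternion rotation: for a unit axis
`(a,b,c)` and `R = (1/(d²+1))·Q*·Q`, the rotation `R` maps a unit vector
`(0,α,β,γ)` orthogonal to the axis to
`cos φ · (0,α,β,γ) + sin φ · (0, (a,b,c) × (α,β,γ))`, with
`cos φ = (d²−1)/(d²+1)` and `sin φ = 2d/(d²+1)`. -/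
theorem quaternion_rotation_angle (d a b c : ℝ)
    (haxis : a ^ 2 + b ^ 2 + c ^ 2 = 1)
    (n : ℝ) (hn : n = d ^ 2 + 1)
    (R : Matrix (Fin 4) (Fin 4) ℝ) (hR : R = (1 / n) • (antiQ d a b c * matQ d a b c))
    (α β γ : ℝ) (hunit : α ^ 2 + β ^ 2 + γ ^ 2 = 1)
    (horth : a * α + b * β + c * γ = 0) :
    R.mulVec ![0, α, β, γ] =
      ((d ^ 2 - 1) / (d ^ 2 + 1)) • ![0, α, β, γ] +
      (2 * d / (d ^ 2 + 1)) • ![0, b * γ - c * β, c * α - a * γ, a * β - b * α] := by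
  subst hn hR
  have hu : ![a, b, c] ⬝ᵥ ![a, b, c] = 1 := by simpa [sq, add_assoc] using haxis
  have huv : ![a, b, c] ⬝ᵥ ![α, β, γ] = 0 := by simpa [add_assoc] using horth
  simpa [huv, cross_apply] using quaternion_rotation_angle_general d ![a, b, c] ![α, β, γ] hu
end
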